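/- In the many-to-one capacitated repeated stochastic matching model, where the graph is bipartite and every vertex on one side has capacity 1, for every capacitated stable matching process SM (i.e., for every tie-breaking rule in the greedy step), every online algorithm ALG, and all nonnegative round weights w_1, …, w_T, the expected reward of SM is at least 1/7 times the expected reward of ALG. -/

import Mathlib

open Finset

/-- A finite simple graph presented via an abstract edge type: each edge has a
set of exactly two endpoints, and distinct edges have distinct endpoint sets. -/
structure GraphEdges (V E : Type) where
  ends : E → Finset V
  card_ends : ∀ e, (ends e).card = 2
  ends_injective : Function.Injective ends

variable {V E : Type}

/-- A capacitated matching: each vertex `v` is incident to at most `C v`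
of its edges. -/
def GraphEdges.IsCapMatching [DecidableEq V] (G : GraphEdges V E) (C : V → ℕ)
    (M : Finset E) : Prop :=
  ∀ v, (M.filter (fun e => v ∈ G.ends e)).card ≤ C v

/-- `select` is an online algorithm in the capacitated model: under each
realization `ω` it selects a capacitated matching in every round, and its
round-`t` selection depends only on its own selections in earlier rounds and
on the realized values of the edges it selected in those rounds. -/
def GraphEdges.IsOnlineCap [DecidableEq V] (G : GraphEdges V E) (C : V → ℕ)
    (select : (E → Bool) → ℕ → Finset E) : Prop :=
  (∀ ω t, G.IsCapMatching C (select ω t)) ∧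
  (∀ ω ω' t, (∀ s, s < t → ∀ e ∈ select ω s, ω' e = ω e) → select ω' t = select ω t)

/-- Probability of the sample graph `ω` under independent Bernoulli edges. -/
def probOf [Fintype E] (p : E → ℝ) (ω : E → Bool) : ℝ :=
  ∏ e : E, if ω e then p e else 1 - p e

/-- Expected reward of an algorithm: the `w`-weighted expected number of
successful selected edges over rounds `0, …, T-1`. -/
noncomputable def expectedReward [Fintype E] [DecidableEq E] (p : E → ℝ) (w : ℕ → ℝ)
    (T : ℕ) (select : (E → Bool) → ℕ → Finset E) : ℝ :=
  ∑ ω : E → Bool, probOf p ω *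
    ∑ t ∈ Finset.range T, w t * ((select ω t).filter (fun e => ω e)).card

/-- Edges selected by `select` in rounds before `t` under realization `ω`. -/
def selectedBefore [DecidableEq E] (select : (E → Bool) → ℕ → Finset E)
    (ω : E → Bool) (t : ℕ) : Finset E :=
  (Finset.range t).biUnion (select ω)

/-- An edge `f` is available for the greedy step, given the dead (previously
selected and revealed unsuccessful) edges `D` and the current partial
capacitated matching `M`: it is not dead, not already in `M`, and can be added
to `M` without violating any vertex capacity. -/
def GraphEdges.AvailCap [DecidableEq V] [DecidableEq E] (G : GraphEdges V E) (C : V → ℕ)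
    (D M : Finset E) (f : E) : Prop :=
  f ∉ D ∧ f ∉ M ∧ G.IsCapMatching C (insert f M)

/-- `L` records, in order, the edges added by a run of the greedy procedure
extending the committed capacitated matching `A`, avoiding dead edges `D`:
each added edge is available (w.r.t. the edge set built so far) of maximum
probability, and at the end no available edge remains. -/
def GraphEdges.IsGreedyRunCap [DecidableEq V] [DecidableEq E] (G : GraphEdges V E)
    (C : V → ℕ) (p : E → ℝ) (D A : Finset E) (L : List E) : Prop :=
  (∀ i : Fin L.length,
      G.AvailCap C D (A ∪ (L.take i).toFinset) (L.get i) ∧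
      ∀ f, G.AvailCap C D (A ∪ (L.take i).toFinset) f → p f ≤ p (L.get i)) ∧
  (∀ f, ¬ G.AvailCap C D (A ∪ L.toFinset) f)

/-- `select` is a capacitated stable matching process: an online algorithm
which in each round keeps all previously selected successful edges and
augments them greedily (ties broken arbitrarily). -/
def GraphEdges.IsSMCap [DecidableEq V] [DecidableEq E] (G : GraphEdges V E)
    (C : V → ℕ) (p : E → ℝ) (select : (E → Bool) → ℕ → Finset E) : Prop :=
  G.IsOnlineCap C select ∧
  ∀ ω t,
    ∃ L : List E,
      G.IsGreedyRunCap C p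
        ((selectedBefore select ω t).filter (fun e => ¬ ω e))
        ((selectedBefore select ω t).filter (fun e => ω e)) L ∧
      select ω t = (selectedBefore select ω t).filter (fun e => ω e) ∪ L.toFinset

/-!
Let `K` bound the sum of `min (C v) 2` over the two endpoints of an edge. Fix a round, and call a
vertex half-full when the successful edges found so far by the stable matching process take up at
least half of its capacity. Filling half of `C v` takes at least `C v / min (C v) 2` edges, so one
pays for `C v` edges at `v` by charging each of those `min (C v) 2` times; summed over the
endpoints, each edge is charged at most `K` times.

The successes of the competitor which the process has found too, or which touch a half-full vertex,
are charged in this way to the successes of the process. The other edges are open: never tried by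
the process and with no half-full endpoint. In each earlier round, greediness blocked an open edge
`e` at an endpoint `v` filled with edges at least as probable as `e`, and since `v` is not half-full
at least half of these are newly tried; so the open edges selected by the competitor are charged,
now weighted by `p`, to the newly tried edges of the process. Whether `e` is open or has been tried
does not depend on the realization of `e`, so in expectation `p`-weights count successes. Each of
the two parts loses a factor `K`, for a total of `2 * K`, and `K = 3` in the many-to-one case.
-/

/-! ### Expectation over the sample graph -/

/-- The expectation of a random variable `X` on the sample graphs, whose edges succeed
independently with probabilities `p`. -/
noncomputable def expectation [Fintype E] [DecidableEq E] (p : E → ℝ) (X : (E → Bool) → ℝ) : ℝ :=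
  ∑ ω : E → Bool, probOf p ω * X ω

/-- A random edge set is *blind* if whether it contains an edge `e` does not depend on the
realization of `e` itself. The edges tried by an online algorithm form such a set. -/
def IsBlind [DecidableEq E] (R : (E → Bool) → Finset E) : Prop :=
  ∀ ω e b, e ∈ R (Function.update ω e b) ↔ e ∈ R ω

section Expectation

variable [Fintype E] {p : E → ℝ}

lemma probOf_nonneg (hp : ∀ e, 0 ≤ p e ∧ p e ≤ 1) (ω : E → Bool) : 0 ≤ probOf p ω := by
  refine Finset.prod_nonneg fun e _ => ?_
  split_ifs
  exacts [(hp e).1, sub_nonneg.2 (hp e).2]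

variable [DecidableEq E]

lemma expectation_mono (hp : ∀ e, 0 ≤ p e ∧ p e ≤ 1) {X Y : (E → Bool) → ℝ}
    (hXY : ∀ ω, X ω ≤ Y ω) : expectation p X ≤ expectation p Y :=
  Finset.sum_le_sum fun ω _ => mul_le_mul_of_nonneg_left (hXY ω) (probOf_nonneg hp ω)

lemma expectation_nonneg (hp : ∀ e, 0 ≤ p e ∧ p e ≤ 1) {X : (E → Bool) → ℝ}
    (hX : ∀ ω, 0 ≤ X ω) : 0 ≤ expectation p X :=
  Finset.sum_nonneg fun ω _ => mul_nonneg (probOf_nonneg hp ω) (hX ω)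

lemma expectation_add (p : E → ℝ) (X Y : (E → Bool) → ℝ) :
    expectation p (fun ω => X ω + Y ω) = expectation p X + expectation p Y := by
  simp only [expectation, mul_add, Finset.sum_add_distrib]

lemma expectation_const_mul (p : E → ℝ) (c : ℝ) (X : (E → Bool) → ℝ) :
    expectation p (fun ω => c * X ω) = c * expectation p X := by
  simp only [expectation, mul_left_comm _ c, Finset.mul_sum]

lemma expectation_sum {ι : Type*} (p : E → ℝ) (s : Finset ι) (X : ι → (E → Bool) → ℝ) :
    expectation p (fun ω => ∑ i ∈ s, X i ω) = ∑ i ∈ s, expectation p (X i) := by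
  simp only [expectation, Finset.mul_sum]
  exact Finset.sum_comm

lemma expectedReward_eq_sum_expectation (p : E → ℝ) (w : ℕ → ℝ) (T : ℕ)
    (select : (E → Bool) → ℕ → Finset E) :
    expectedReward p w T select
      = ∑ t ∈ range T, w t * expectation p fun ω => (#{e ∈ select ω t | ω e} : ℝ) := by
  simp only [← expectation_const_mul, ← expectation_sum]
  rfl

lemma expectedReward_nonneg (hp : ∀ e, 0 ≤ p e ∧ p e ≤ 1) {w : ℕ → ℝ} (hw : ∀ t, 0 ≤ w t)
    (T : ℕ) (select : (E → Bool) → ℕ → Finset E) : 0 ≤ expectedReward p w T select := by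
  rw [expectedReward_eq_sum_expectation]
  exact Finset.sum_nonneg fun t _ =>
    mul_nonneg (hw t) (expectation_nonneg hp fun ω => Nat.cast_nonneg _)

lemma probOf_update (p : E → ℝ) (ω : E → Bool) (e : E) (b : Bool) :
    probOf p (Function.update ω e b)
      = (if b then p e else 1 - p e) * ∏ f ∈ univ.erase e, if ω f then p f else 1 - p f := by
  rw [probOf, ← Finset.mul_prod_erase univ _ (Finset.mem_univ e), Function.update_self]
  congr 1
  refine Finset.prod_congr rfl fun f hf => ?_
  rw [Function.update_of_ne (Finset.ne_of_mem_erase hf)]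

lemma expectation_ite_of_update_eq (p : E → ℝ) {X : (E → Bool) → ℝ} {e : E}
    (hX : ∀ ω b, X (Function.update ω e b) = X ω) :
    expectation p (fun ω => if ω e then X ω else 0) = p e * expectation p X := by
  rw [← sub_eq_zero, expectation, expectation, Finset.mul_sum, ← Finset.sum_sub_distrib]
  -- The summands of two sample graphs that differ exactly at `e` cancel.
  refine Finset.sum_involution (fun ω _ => Function.update ω e (!ω e)) ?_ ?_
    (fun _ _ => Finset.mem_univ _) (fun ω _ => by simp)
  · intro ω _
    have hω := probOf_update p ω e (ω e)
    rw [Function.update_eq_self] at hω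
    rw [hX, hω, probOf_update, Function.update_self]
    cases ω e <;> simp <;> ring
  · intro ω _ _ hfix
    simpa using congrFun hfix e

lemma IsBlind.expectation_card_filter {R : (E → Bool) → Finset E} (hR : IsBlind R) (p : E → ℝ) :
    expectation p (fun ω => (#{e ∈ R ω | ω e} : ℝ)) = expectation p fun ω => ∑ e ∈ R ω, p e := by
  have hcard (ω : E → Bool) : (#{e ∈ R ω | ω e} : ℝ)
      = ∑ e, if ω e then (if e ∈ R ω then 1 else 0) else 0 := by
    rw [← Finset.sum_filter, Finset.sum_ite_mem, Finset.sum_const, nsmul_one,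
      Finset.filter_inter, Finset.univ_inter]
  have hsum (ω : E → Bool) : ∑ e ∈ R ω, p e = ∑ e, p e * if e ∈ R ω then 1 else 0 := by
    simp
  simp only [hcard, hsum, expectation_sum, expectation_const_mul]
  exact Finset.sum_congr rfl fun e _ =>
    expectation_ite_of_update_eq p fun ω b => by simp only [hR ω e b]

end Expectation

section IsBlind

variable [DecidableEq E]

lemma update_iff_of_forall_imp {e : E} {P : (E → Bool) → Prop}
    (hP : ∀ ω b, P ω → P (Function.update ω e b)) (ω : E → Bool) (b : Bool) :
    P (Function.update ω e b) ↔ P ω :=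
  ⟨fun h => by simpa using hP _ (ω e) h, hP ω b⟩

lemma IsBlind.inter {R R' : (E → Bool) → Finset E} (hR : IsBlind R) (hR' : IsBlind R') :
    IsBlind fun ω => R ω ∩ R' ω := fun ω e b => by
  simp only [Finset.mem_inter, hR ω e b, hR' ω e b]

end IsBlind

/-! ### Edges tried by an algorithm -/

/-- The edges that `select` has found to be successful in rounds before `t`. -/
def successesBefore [DecidableEq E] (select : (E → Bool) → ℕ → Finset E) (ω : E → Bool) (t : ℕ) :
    Finset E :=
  {e ∈ selectedBefore select ω t | ω e}

section SelectedBefore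

variable [DecidableEq E] {select : (E → Bool) → ℕ → Finset E} {ω : E → Bool} {s t : ℕ}

lemma selectedBefore_mono (hst : s ≤ t) : selectedBefore select ω s ⊆ selectedBefore select ω t :=
  Finset.biUnion_subset_biUnion_of_subset_left _ (Finset.range_subset_range.2 hst)

lemma select_subset_selectedBefore (hst : s < t) : select ω s ⊆ selectedBefore select ω t :=
  Finset.subset_biUnion_of_mem (select ω) (Finset.mem_range.2 hst)

lemma successesBefore_mono (hst : s ≤ t) :
    successesBefore select ω s ⊆ successesBefore select ω t :=
  Finset.filter_subset_filter _ (selectedBefore_mono hst)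

lemma selectedBefore_succ (select : (E → Bool) → ℕ → Finset E) (ω : E → Bool) (t : ℕ) :
    selectedBefore select ω (t + 1) = select ω t ∪ selectedBefore select ω t := by
  rw [selectedBefore, Finset.range_add_one, Finset.biUnion_insert, selectedBefore]

lemma sum_selectedBefore {M : Type*} [AddCommMonoid M] (select : (E → Bool) → ℕ → Finset E)
    (ω : E → Bool) (t : ℕ) (g : E → M) :
    ∑ e ∈ selectedBefore select ω t, g e
      = ∑ s ∈ range t, ∑ e ∈ select ω s \ selectedBefore select ω s, g e := by
  induction t with
  | zero => rfl
  | succ t ih =>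
    rw [Finset.sum_range_succ, ← ih, selectedBefore_succ, ← Finset.sdiff_union_self_eq_union,
      Finset.sum_union Finset.sdiff_disjoint, add_comm]

end SelectedBefore

lemma sum_le_mul_sum_of_card_le {ι R : Type*} [Semiring R] [LinearOrder R] [IsOrderedRing R]
    {X Y : Finset ι} {g : ι → R} {k : ℕ} (hcard : #X ≤ k * #Y) (hg : ∀ y ∈ Y, 0 ≤ g y)
    (hle : ∀ x ∈ X, ∀ y ∈ Y, g x ≤ g y) : ∑ x ∈ X, g x ≤ k * ∑ y ∈ Y, g y := by
  obtain rfl | hY := Y.eq_empty_or_nonempty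
  · obtain rfl : X = ∅ := by simpa only [Finset.card_empty, mul_zero, Nat.le_zero,
      Finset.card_eq_zero] using hcard
    simp only [Finset.sum_empty, mul_zero, le_refl]
  obtain ⟨y, hy, hmin⟩ := Finset.exists_min_image Y g hY
  calc ∑ x ∈ X, g x ≤ #X • g y := Finset.sum_le_card_nsmul X g _ fun x hx => hle x hx y hy
    _ ≤ (k * #Y) • g y := nsmul_le_nsmul_left (hg y hy) hcard
    _ = k * (#Y • g y) := by rw [mul_nsmul', nsmul_eq_mul]
    _ ≤ k * ∑ y ∈ Y, g y :=
        mul_le_mul_of_nonneg_left (Finset.card_nsmul_le_sum Y g _ hmin) k.cast_nonneg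

namespace GraphEdges

section Online

variable [DecidableEq V] [DecidableEq E] {G : GraphEdges V E} {C : V → ℕ}
  {select : (E → Bool) → ℕ → Finset E} {ω : E → Bool} {e : E} {t : ℕ}

lemma IsOnlineCap.select_update (h : G.IsOnlineCap C select)
    (he : e ∉ selectedBefore select ω t) (b : Bool) :
    select (Function.update ω e b) t = select ω t := by
  refine h.2 ω _ t fun s hs f hf => Function.update_of_ne ?_ _ _
  rintro rfl
  exact he (select_subset_selectedBefore hs hf)

lemma IsOnlineCap.selectedBefore_update (h : G.IsOnlineCap C select)
    (he : e ∉ selectedBefore select ω t) (b : Bool) :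
    selectedBefore select (Function.update ω e b) t = selectedBefore select ω t :=
  Finset.biUnion_congr rfl fun _ hs =>
    h.select_update (fun hes => he (selectedBefore_mono (Finset.mem_range.1 hs).le hes)) b

lemma IsOnlineCap.successesBefore_update (h : G.IsOnlineCap C select)
    (he : e ∉ selectedBefore select ω t) (b : Bool) :
    successesBefore select (Function.update ω e b) t = successesBefore select ω t := by
  rw [successesBefore, h.selectedBefore_update he]
  refine Finset.filter_congr fun f hf => ?_
  rw [Function.update_of_ne (ne_of_mem_of_not_mem hf he)]

lemma IsOnlineCap.isBlind_selectedBefore (h : G.IsOnlineCap C select) (t : ℕ) :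
    IsBlind fun ω => selectedBefore select ω t := fun ω e b =>
  not_iff_not.1 <| update_iff_of_forall_imp (P := fun ω => e ∉ selectedBefore select ω t)
    (fun ω b he => by rwa [h.selectedBefore_update he]) ω b

end Online

/-! ### Charging edges to edges at a common endpoint -/

/-- The number of edges of `M` incident to `v`. -/
def degreeIn [DecidableEq V] (G : GraphEdges V E) (M : Finset E) (v : V) : ℕ :=
  #{e ∈ M | v ∈ G.ends e}

/-- The edges of `M` take up at least half of the capacity of `v`. -/
def IsHalfFull [DecidableEq V] (G : GraphEdges V E) (C : V → ℕ) (M : Finset E) (v : V) : Prop :=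
  C v ≤ 2 * G.degreeIn M v

instance [DecidableEq V] (G : GraphEdges V E) (C : V → ℕ) (M : Finset E) (v : V) :
    Decidable (G.IsHalfFull C M v) :=
  inferInstanceAs (Decidable (_ ≤ _))

lemma sum_min_two_le_three {G : GraphEdges V E} {C : V → ℕ} {e : E}
    (he : ∃ v ∈ G.ends e, C v ≤ 1) : ∑ v ∈ G.ends e, min (C v) 2 ≤ 3 := by
  classical
  obtain ⟨v, hv, hC⟩ := he
  have hrest : ∑ u ∈ (G.ends e).erase v, min (C u) 2 ≤ #((G.ends e).erase v) • 2 :=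
    Finset.sum_le_card_nsmul _ _ _ fun u _ => min_le_right _ _
  rw [Finset.card_erase_of_mem hv, G.card_ends, smul_eq_mul] at hrest
  rw [← Finset.add_sum_erase _ _ hv]
  omega

section Charging

variable [DecidableEq V] {G : GraphEdges V E} {C : V → ℕ} {K : ℕ} {M N : Finset E} {v : V}

lemma degreeIn_mono (G : GraphEdges V E) (hMN : M ⊆ N) (v : V) :
    G.degreeIn M v ≤ G.degreeIn N v :=
  Finset.card_le_card (Finset.filter_subset_filter _ hMN)

lemma isCapMatching_iff_degreeIn_le : G.IsCapMatching C M ↔ ∀ v, G.degreeIn M v ≤ C v := Iff.rfl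

lemma IsCapMatching.subset (hN : G.IsCapMatching C N) (hMN : M ⊆ N) : G.IsCapMatching C M :=
  fun v => (G.degreeIn_mono hMN v).trans (hN v)

lemma IsCapMatching.mem_of_le_degreeIn {f : E} (hN : G.IsCapMatching C N) (hMN : M ⊆ N)
    (hM : C v ≤ G.degreeIn M v) (hf : f ∈ N) (hvf : v ∈ G.ends f) : f ∈ M := by
  have heq := Finset.eq_of_subset_of_card_le
    (Finset.filter_subset_filter (fun e => v ∈ G.ends e) hMN) ((hN v).trans hM)
  exact (Finset.mem_filter.1 (heq ▸ Finset.mem_filter.2 ⟨hf, hvf⟩)).1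

lemma IsHalfFull.mono (h : G.IsHalfFull C M v) (hMN : M ⊆ N) : G.IsHalfFull C N v :=
  h.trans (Nat.mul_le_mul_left 2 (G.degreeIn_mono hMN v))

-- For `C v = 1` this uses that degrees are integers: an edge at `v` fills it completely.
lemma IsHalfFull.le_min_two_mul (h : G.IsHalfFull C M v) :
    C v ≤ min (C v) 2 * G.degreeIn M v := by
  rw [IsHalfFull] at h
  rcases le_total (C v) 2 with hC | hC
  · rw [min_eq_left hC]
    rcases (C v).eq_zero_or_pos with hzero | hpos
    · simp only [hzero, zero_mul, le_refl]
    · exact Nat.le_mul_of_pos_right _ (by omega)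
  · rwa [min_eq_right hC]

lemma isHalfFull_or_isHalfFull_of_le_degreeIn_union [DecidableEq E]
    (h : C v ≤ G.degreeIn (M ∪ N) v) : G.IsHalfFull C M v ∨ G.IsHalfFull C N v := by
  have hunion : G.degreeIn (M ∪ N) v ≤ G.degreeIn M v + G.degreeIn N v := by
    simp only [degreeIn, Finset.filter_union]
    exact Finset.card_union_le _ _
  simp only [IsHalfFull]
  omega

lemma sum_le_mul_sum_of_charge {R : Type*} [Semiring R] [PartialOrder R] [IsOrderedRing R]
    (G : GraphEdges V E) {κ : V → ℕ} (hκ : ∀ e, ∑ v ∈ G.ends e, κ v ≤ K)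
    {B F : Finset E} {g : E → R} (hg : ∀ e, 0 ≤ g e)
    (P : V → E → Prop) [∀ v, DecidablePred (P v)] (hP : ∀ e ∈ B, ∃ v ∈ G.ends e, P v e)
    (hcharge : ∀ v, ∑ e ∈ B with v ∈ G.ends e ∧ P v e, g e
      ≤ κ v * ∑ f ∈ F with v ∈ G.ends f, g f) :
    ∑ e ∈ B, g e ≤ K * ∑ f ∈ F, g f := by
  let W : Finset V := B.biUnion G.ends
  have hcover : ∀ e ∈ B, g e ≤ ∑ v ∈ W with v ∈ G.ends e ∧ P v e, g e := by
    intro e he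
    obtain ⟨v, hv, hPv⟩ := hP e he
    have hvW : v ∈ W.filter fun v => v ∈ G.ends e ∧ P v e :=
      Finset.mem_filter.2 ⟨Finset.mem_biUnion.2 ⟨e, he, hv⟩, hv, hPv⟩
    exact Finset.single_le_sum (f := fun _ => g e) (fun _ _ => hg e) hvW
  have hbudget : ∀ f ∈ F, ∑ v ∈ W with v ∈ G.ends f, (κ v : R) * g f ≤ K * g f := by
    intro f _
    rw [← Finset.sum_mul]
    refine mul_le_mul_of_nonneg_right ?_ (hg f)
    have hsub : (W.filter fun v => v ∈ G.ends f) ⊆ G.ends f := fun v hv =>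
      (Finset.mem_filter.1 hv).2
    rw [← Nat.cast_sum]
    exact Nat.mono_cast ((Finset.sum_le_sum_of_subset hsub).trans (hκ f))
  calc ∑ e ∈ B, g e
      ≤ ∑ e ∈ B, ∑ v ∈ W with v ∈ G.ends e ∧ P v e, g e := Finset.sum_le_sum hcover
    _ = ∑ v ∈ W, ∑ e ∈ B with v ∈ G.ends e ∧ P v e, g e :=
        Finset.sum_comm' fun e v => by simp only [Finset.mem_filter]; tauto
    _ ≤ ∑ v ∈ W, κ v * ∑ f ∈ F with v ∈ G.ends f, g f :=
        Finset.sum_le_sum fun v _ => hcharge v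
    _ = ∑ f ∈ F, ∑ v ∈ W with v ∈ G.ends f, κ v * g f := by
        simp only [Finset.mul_sum]
        exact Finset.sum_comm' fun v f => by simp only [Finset.mem_filter]; tauto
    _ ≤ ∑ f ∈ F, K * g f := Finset.sum_le_sum hbudget
    _ = K * ∑ f ∈ F, g f := (Finset.mul_sum _ _ _).symm

lemma IsCapMatching.card_le_mul_card_of_isHalfFull
    (hK : ∀ e, ∑ v ∈ G.ends e, min (C v) 2 ≤ K) {S : Finset E} (hN : G.IsCapMatching C N)
    (h : ∀ e ∈ N, e ∈ S ∨ ∃ v ∈ G.ends e, G.IsHalfFull C S v) : #N ≤ K * #S := by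
  classical
  have hP : ∀ e ∈ N, ∃ v ∈ G.ends e, e ∈ S ∨ G.IsHalfFull C S v := by
    intro e he
    obtain heS | ⟨v, hv, hfull⟩ := h e he
    · obtain ⟨v, hv⟩ : (G.ends e).Nonempty := Finset.card_pos.1 (by rw [G.card_ends]; norm_num)
      exact ⟨v, hv, Or.inl heS⟩
    · exact ⟨v, hv, Or.inr hfull⟩
  have hcharge (v : V) : #{e ∈ N | v ∈ G.ends e ∧ (e ∈ S ∨ G.IsHalfFull C S v)}
      ≤ min (C v) 2 * G.degreeIn S v := by
    by_cases hfull : G.IsHalfFull C S v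
    · simp only [hfull, or_true, and_true]
      exact (hN v).trans hfull.le_min_two_mul
    · have hpos : 0 < min (C v) 2 := by
        simp only [IsHalfFull] at hfull
        omega
      simp only [hfull, or_false]
      refine le_trans (Finset.card_le_card fun e he => ?_) (Nat.le_mul_of_pos_left _ hpos)
      simp only [Finset.mem_filter] at he ⊢
      exact he.2.symm
  rw [Finset.card_eq_sum_ones, Finset.card_eq_sum_ones]
  refine G.sum_le_mul_sum_of_charge hK (fun _ => zero_le_one) _ hP fun v => ?_
  rw [← Finset.card_eq_sum_ones, ← Finset.card_eq_sum_ones]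
  exact hcharge v

lemma IsCapMatching.sum_le_mul_sum_of_isHalfFull {R : Type*} [Semiring R] [LinearOrder R]
    [IsOrderedRing R] (hK : ∀ e, ∑ v ∈ G.ends e, min (C v) 2 ≤ K) {B F : Finset E}
    (hB : G.IsCapMatching C B) {g : E → R} (hg : ∀ e, 0 ≤ g e)
    (h : ∀ e ∈ B, ∃ v ∈ G.ends e, G.IsHalfFull C F v ∧ ∀ f ∈ F, v ∈ G.ends f → g e ≤ g f) :
    ∑ e ∈ B, g e ≤ K * ∑ f ∈ F, g f := by
  classical
  refine G.sum_le_mul_sum_of_charge hK hg _ h fun v => ?_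
  by_cases hfull : G.IsHalfFull C F v
  · refine sum_le_mul_sum_of_card_le ?_ (fun f _ => hg f) fun e he f hf => ?_
    · refine le_trans ((Finset.card_le_card fun e he => ?_).trans (hB v)) hfull.le_min_two_mul
      simp only [Finset.mem_filter] at he ⊢
      exact ⟨he.1, he.2.1⟩
    · simp only [Finset.mem_filter] at he hf
      exact he.2.2.2 f hf.1 hf.2
  · simp only [hfull, false_and, and_false, Finset.filter_false, Finset.sum_empty]
    exact mul_nonneg (Nat.cast_nonneg _) (Finset.sum_nonneg fun f _ => hg f)

end Charging

/-! ### Greedy rounds -/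

section Greedy

variable [DecidableEq V] [DecidableEq E] {G : GraphEdges V E} {C : V → ℕ} {p : E → ℝ}

lemma IsCapMatching.exists_le_degreeIn_of_not_insert {M : Finset E} {e : E}
    (hM : G.IsCapMatching C M) (he : ¬ G.IsCapMatching C (insert e M)) :
    ∃ v ∈ G.ends e, C v ≤ G.degreeIn M v := by
  rw [isCapMatching_iff_degreeIn_le] at he
  push Not at he
  obtain ⟨v, hv⟩ := he
  rw [degreeIn, Finset.filter_insert] at hv
  split_ifs at hv with hve
  · exact ⟨v, hve, Nat.lt_succ_iff.1 (hv.trans_le (Finset.card_insert_le _ _))⟩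
  · exact absurd (hM v) hv.not_ge

lemma IsGreedyRunCap.notMem_of_mem {D A : Finset E} {L : List E}
    (hL : G.IsGreedyRunCap C p D A L) {f : E} (hf : f ∈ L) : f ∉ D ∧ f ∉ A := by
  obtain ⟨i, rfl⟩ := List.get_of_mem hf
  obtain ⟨hD, hA, -⟩ := (hL.1 i).1
  exact ⟨hD, fun h => hA (Finset.mem_union_left _ h)⟩

lemma IsGreedyRunCap.exists_blocking_end {D A : Finset E} {L : List E}
    (hL : G.IsGreedyRunCap C p D A L) (hM : G.IsCapMatching C (A ∪ L.toFinset)) {e : E}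
    (hD : e ∉ D) (he : e ∉ A ∪ L.toFinset) :
    ∃ v ∈ G.ends e, C v ≤ G.degreeIn (A ∪ L.toFinset) v ∧
      ∀ f ∈ L, v ∈ G.ends f → p e ≤ p f := by
  classical
  -- The blocking endpoint is the one that is full when `e` first becomes unavailable.
  have hblocked : ∃ i, ¬ G.AvailCap C D (A ∪ (L.take i).toFinset) e :=
    ⟨L.length, by simpa only [List.take_length] using hL.2 e⟩
  let i := Nat.find hblocked
  have hsub : A ∪ (L.take i).toFinset ⊆ A ∪ L.toFinset :=
    Finset.union_subset_union_right fun f hf =>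
      List.mem_toFinset.2 (List.mem_of_mem_take (List.mem_toFinset.1 hf))
  obtain ⟨v, hv, hfull⟩ := (hM.subset hsub).exists_le_degreeIn_of_not_insert fun h =>
    Nat.find_spec hblocked ⟨hD, fun h' => he (hsub h'), h⟩
  refine ⟨v, hv, hfull.trans (G.degreeIn_mono hsub v), fun f hf hvf => ?_⟩
  have hfi : f ∈ A ∪ (L.take i).toFinset :=
    hM.mem_of_le_degreeIn hsub hfull (Finset.mem_union_right _ (List.mem_toFinset.2 hf)) hvf
  have hftake : f ∈ L.take i :=
    List.mem_toFinset.1 ((Finset.mem_union.1 hfi).resolve_left (hL.notMem_of_mem hf).2)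
  obtain ⟨j, hj, rfl⟩ := List.mem_take_iff_getElem.1 hftake
  exact (hL.1 ⟨j, hj.trans_le (min_le_right _ _)⟩).2 e
    (not_not.1 (Nat.find_min hblocked (hj.trans_le (min_le_left _ _))))

end Greedy

section StableMatching

variable [DecidableEq V] [DecidableEq E] {G : GraphEdges V E} {C : V → ℕ} {p : E → ℝ} {K : ℕ}
  {sm alg : (E → Bool) → ℕ → Finset E} {ω : E → Bool} {s t : ℕ}

lemma IsSMCap.successesBefore_subset_select (h : G.IsSMCap C p sm) (ω : E → Bool) (t : ℕ) :
    successesBefore sm ω t ⊆ sm ω t := by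
  obtain ⟨L, -, hsel⟩ := h.2 ω t
  exact hsel ▸ Finset.subset_union_left

lemma IsSMCap.filter_select_eq_successesBefore (h : G.IsSMCap C p sm) (ω : E → Bool) (t : ℕ) :
    {e ∈ sm ω t | ω e} = successesBefore sm ω (t + 1) := by
  rw [successesBefore, selectedBefore_succ, Finset.filter_union, eq_comm, Finset.union_eq_left]
  exact fun e he => Finset.mem_filter.2
    ⟨h.successesBefore_subset_select ω t he, (Finset.mem_filter.1 he).2⟩

lemma IsSMCap.exists_blocking_end (h : G.IsSMCap C p sm) {e : E}
    (he : e ∉ selectedBefore sm ω (t + 1)) :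
    ∃ v ∈ G.ends e,
      C v ≤ G.degreeIn (successesBefore sm ω t ∪ (sm ω t \ selectedBefore sm ω t)) v ∧
      ∀ f ∈ sm ω t \ selectedBefore sm ω t, v ∈ G.ends f → p e ≤ p f := by
  obtain ⟨L, hL, hsel⟩ := h.2 ω t
  have hfresh : sm ω t \ selectedBefore sm ω t = L.toFinset := by
    ext f
    have hf := fun hfL : f ∈ L => hL.notMem_of_mem hfL
    simp only [hsel, Finset.mem_sdiff, Finset.mem_union, Finset.mem_filter, List.mem_toFinset]
      at hf ⊢
    tauto
  rw [selectedBefore_succ, Finset.mem_union, not_or, hsel] at he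
  have hblocking := hL.exists_blocking_end (hsel ▸ h.1.1 ω t)
    (fun hD => he.2 (Finset.mem_filter.1 hD).1) he.1
  simpa only [hfresh, List.mem_toFinset, successesBefore] using hblocking

variable [Fintype E]

/-- The edges that `sm` has not tried before round `t` and neither of whose endpoints is half-full
of successful edges found before round `t`. -/
def openEdges (G : GraphEdges V E) (C : V → ℕ) (sm : (E → Bool) → ℕ → Finset E) (t : ℕ)
    (ω : E → Bool) : Finset E :=
  {e | e ∉ selectedBefore sm ω t ∧
    ∀ v ∈ G.ends e, ¬ G.IsHalfFull C (successesBefore sm ω t) v}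

lemma mem_openEdges {e : E} : e ∈ G.openEdges C sm t ω ↔ e ∉ selectedBefore sm ω t ∧
    ∀ v ∈ G.ends e, ¬ G.IsHalfFull C (successesBefore sm ω t) v := by
  simp only [openEdges, Finset.mem_filter, Finset.mem_univ, true_and]

lemma IsOnlineCap.isBlind_openEdges (h : G.IsOnlineCap C sm) (t : ℕ) :
    IsBlind (G.openEdges C sm t) := fun ω e b =>
  update_iff_of_forall_imp (P := fun ω => e ∈ G.openEdges C sm t ω) (fun ω b he => by
    have hnew := (mem_openEdges.1 he).1
    rw [mem_openEdges] at he ⊢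
    rwa [h.selectedBefore_update hnew, h.successesBefore_update hnew]) ω b

lemma IsSMCap.sum_inter_openEdges_le (h : G.IsSMCap C p sm)
    (hK : ∀ e, ∑ v ∈ G.ends e, min (C v) 2 ≤ K) (hp : ∀ e, 0 ≤ p e) {M : Finset E}
    (hM : G.IsCapMatching C M) (hst : s < t) :
    ∑ e ∈ M ∩ G.openEdges C sm t ω, p e
      ≤ K * ∑ f ∈ sm ω s \ selectedBefore sm ω s, p f := by
  refine (hM.subset Finset.inter_subset_left).sum_le_mul_sum_of_isHalfFull hK hp fun e he => ?_
  obtain ⟨hnew, hnotHalf⟩ := mem_openEdges.1 (Finset.mem_inter.1 he).2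
  obtain ⟨v, hv, hfull, hbest⟩ :=
    h.exists_blocking_end fun hs => hnew (selectedBefore_mono (Nat.succ_le_of_lt hst) hs)
  refine ⟨v, hv, ?_, hbest⟩
  exact (isHalfFull_or_isHalfFull_of_le_degreeIn_union hfull).resolve_left fun hhalf =>
    hnotHalf v hv (hhalf.mono (successesBefore_mono hst.le))

lemma IsSMCap.sum_selectedBefore_inter_openEdges_le (h : G.IsSMCap C p sm)
    (halg : G.IsOnlineCap C alg) (hK : ∀ e, ∑ v ∈ G.ends e, min (C v) 2 ≤ K)
    (hp : ∀ e, 0 ≤ p e) (ω : E → Bool) (t : ℕ) :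
    ∑ e ∈ selectedBefore alg ω t ∩ G.openEdges C sm t ω, p e
      ≤ K * ∑ e ∈ selectedBefore sm ω t, p e := by
  rw [← Finset.sum_ite_mem, sum_selectedBefore, sum_selectedBefore, Finset.mul_sum]
  refine Finset.sum_le_sum fun s hs => ?_
  rw [Finset.sum_ite_mem]
  exact h.sum_inter_openEdges_le hK hp ((halg.1 ω s).subset Finset.sdiff_subset)
    (Finset.mem_range.1 hs)

lemma IsCapMatching.card_filter_sdiff_openEdges_le (hK : ∀ e, ∑ v ∈ G.ends e, min (C v) 2 ≤ K)
    {M : Finset E} (hM : G.IsCapMatching C M) (sm : (E → Bool) → ℕ → Finset E) (ω : E → Bool)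
    (t : ℕ) : #{e ∈ M \ G.openEdges C sm t ω | ω e} ≤ K * #(successesBefore sm ω t) := by
  refine (hM.subset ((Finset.filter_subset _ _).trans
    Finset.sdiff_subset)).card_le_mul_card_of_isHalfFull hK fun e he => ?_
  simp only [Finset.mem_filter, Finset.mem_sdiff, mem_openEdges] at he
  by_cases htried : e ∈ selectedBefore sm ω t
  · exact Or.inl (Finset.mem_filter.2 ⟨htried, he.2⟩)
  · right
    by_contra! hnotHalf
    exact he.1.2 ⟨htried, hnotHalf⟩

lemma IsSMCap.card_filter_select_le (hK : ∀ e, ∑ v ∈ G.ends e, min (C v) 2 ≤ K)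
    (halg : G.IsOnlineCap C alg) (h : G.IsSMCap C p sm) (ω : E → Bool) (t : ℕ) :
    #{e ∈ alg ω t | ω e} ≤ K * #{e ∈ sm ω t | ω e}
      + #{e ∈ selectedBefore alg ω (t + 1) ∩ G.openEdges C sm (t + 1) ω | ω e} := by
  rw [h.filter_select_eq_successesBefore, ← Finset.sdiff_union_inter (alg ω t)
    (G.openEdges C sm (t + 1) ω), Finset.filter_union]
  refine (Finset.card_union_le _ _).trans (add_le_add
    ((halg.1 ω t).card_filter_sdiff_openEdges_le hK sm ω (t + 1)) (Finset.card_le_card ?_))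
  exact Finset.filter_subset_filter _
    (Finset.inter_subset_inter_right (select_subset_selectedBefore t.lt_succ_self))

lemma IsSMCap.expectation_card_filter_select (h : G.IsSMCap C p sm) (t : ℕ) :
    expectation p (fun ω => (#{e ∈ sm ω t | ω e} : ℝ))
      = expectation p fun ω => ∑ e ∈ selectedBefore sm ω (t + 1), p e := by
  simp only [h.filter_select_eq_successesBefore]
  exact (h.1.isBlind_selectedBefore (t + 1)).expectation_card_filter p

theorem IsSMCap.expectation_card_filter_select_le (h : G.IsSMCap C p sm)
    (halg : G.IsOnlineCap C alg) (hK : ∀ e, ∑ v ∈ G.ends e, min (C v) 2 ≤ K)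
    (hp : ∀ e, 0 ≤ p e ∧ p e ≤ 1) (t : ℕ) :
    expectation p (fun ω => (#{e ∈ alg ω t | ω e} : ℝ))
      ≤ 2 * K * expectation p fun ω => (#{e ∈ sm ω t | ω e} : ℝ) := by
  let R : (E → Bool) → Finset E := fun ω =>
    selectedBefore alg ω (t + 1) ∩ G.openEdges C sm (t + 1) ω
  have hR : IsBlind R :=
    (halg.isBlind_selectedBefore (t + 1)).inter (h.1.isBlind_openEdges (t + 1))
  have hopen : expectation p (fun ω => (#{e ∈ R ω | ω e} : ℝ))
      ≤ K * expectation p fun ω => (#{e ∈ sm ω t | ω e} : ℝ) := by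
    rw [hR.expectation_card_filter, h.expectation_card_filter_select, ← expectation_const_mul]
    exact expectation_mono hp fun ω =>
      h.sum_selectedBefore_inter_openEdges_le halg hK (fun e => (hp e).1) ω (t + 1)
  calc expectation p (fun ω => (#{e ∈ alg ω t | ω e} : ℝ))
      ≤ expectation p fun ω => K * (#{e ∈ sm ω t | ω e} : ℝ) + (#{e ∈ R ω | ω e} : ℝ) :=
        expectation_mono hp fun ω => by exact_mod_cast h.card_filter_select_le hK halg ω t
    _ = K * expectation p (fun ω => (#{e ∈ sm ω t | ω e} : ℝ))
        + expectation p fun ω => (#{e ∈ R ω | ω e} : ℝ) := by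
        rw [expectation_add, expectation_const_mul]
    _ ≤ 2 * K * expectation p fun ω => (#{e ∈ sm ω t | ω e} : ℝ) := by linarith

end StableMatching

end GraphEdges

theorem smCap_manyToOne_approximates_opt_general
    {V E : Type} [DecidableEq V] [Fintype E] [DecidableEq E]
    (G : GraphEdges V E) (C : V → ℕ) {K : ℕ} (hK : ∀ e, ∑ v ∈ G.ends e, min (C v) 2 ≤ K)
    (p : E → ℝ) (hp : ∀ e, 0 ≤ p e ∧ p e ≤ 1)
    (T : ℕ) (w : ℕ → ℝ) (hw : ∀ t, 0 ≤ w t)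
    (sm alg : (E → Bool) → ℕ → Finset E)
    (hsm : G.IsSMCap C p sm) (halg : G.IsOnlineCap C alg) :
    expectedReward p w T alg ≤ 2 * K * expectedReward p w T sm := by
  simp only [expectedReward_eq_sum_expectation, Finset.mul_sum]
  refine Finset.sum_le_sum fun t _ => ?_
  rw [mul_left_comm]
  exact mul_le_mul_of_nonneg_left (hsm.expectation_card_filter_select_le halg hK hp t) (hw t)

/-- In the many-to-one capacitated model — the graph is
bipartite with `side` distinguishing the two parts, and every vertex on the
`true` side has capacity 1 — every capacitated stable matching process is a
`1/7`-approximation to every online algorithm. -/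
theorem smCap_manyToOne_approximates_opt
    {V E : Type} [DecidableEq V] [Fintype E] [DecidableEq E]
    (G : GraphEdges V E) (C : V → ℕ) (hC : ∀ v, 0 < C v)
    (side : V → Bool)
    (hbip : ∀ e, ∃ a b, G.ends e = {a, b} ∧ side a = true ∧ side b = false)
    (hcap1 : ∀ v, side v = true → C v = 1)
    (p : E → ℝ) (hp : ∀ e, 0 ≤ p e ∧ p e ≤ 1)
    (T : ℕ) (w : ℕ → ℝ) (hw : ∀ t, 0 ≤ w t)
    (sm alg : (E → Bool) → ℕ → Finset E)
    (hsm : G.IsSMCap C p sm) (halg : G.IsOnlineCap C alg) :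
    (1 / 7 : ℝ) * expectedReward p w T alg ≤ expectedReward p w T sm := by
  have hK (e : E) : ∑ v ∈ G.ends e, min (C v) 2 ≤ 3 := by
    obtain ⟨a, b, hends, ha, -⟩ := hbip e
    exact G.sum_min_two_le_three ⟨a, by simp only [hends, Finset.mem_insert_self], (hcap1 a ha).le⟩
  have hgeneral := smCap_manyToOne_approximates_opt_general G C hK p hp T w hw sm alg hsm halg
  have hnonneg := expectedReward_nonneg hp hw T sm
  push_cast at hgeneral
  linarith
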